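/- For all integers p, q with 1 ≤ p < q, the Baumslag–Solitar group BS(p,q) = ⟨a, t | t a^p t⁻¹ = a^q⟩ belongs to the class ℬ_𝔦, where 𝔦 is the identity function 𝔦(n) = n. -/

import Mathlib

namespace CAG

/-- The convolution `w₁ ⊗ w₂` of two words, over the padded alphabet
`(Σ ∪ {⋄})²`, modelled as `Option α × Option α` where `none` is the padding symbol `⋄`. -/
def conv {α : Type*} : List α → List α → List (Option α × Option α)
  | [], [] => []
  | a :: as, [] => (some a, none) :: conv as []
  | [], b :: bs => (none, some b) :: conv [] bs
  | a :: as, b :: bs => (some a, some b) :: conv as bs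

/-- A binary relation on words is regular if the language of convolutions of its pairs
is a regular language. -/
def IsRegularRel {α : Type*} (R : Set (List α × List α)) : Prop :=
  Language.IsRegular {w | ∃ p ∈ R, w = conv p.1 p.2}

variable {G : Type*} [Group G]

/-- The alphabet `S = A ∪ A⁻¹` associated to a generating set `A ⊆ G`. -/
def Alph (A : Set G) : Type _ := {x : G // x ∈ A ∪ A⁻¹}

/-- The canonical evaluation map `π : S* → G`. -/
def eval (A : Set G) (w : List (Alph A)) : G := (w.map Subtype.val).prod

/-- The word length `d_A(g)` of `g` with respect to the generating set `A`. -/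
noncomputable def wordLength (A : Set G) (g : G) : ℕ :=
  sInf {n | ∃ w : List (Alph A), eval A w = g ∧ w.length = n}

/-- The distance `d_A(g₁, g₂)` in the Cayley graph of `G` with respect to `A`. -/
noncomputable def cayleyDist (A : Set G) (g₁ g₂ : G) : ℕ := wordLength A (g₁⁻¹ * g₂)

/-- `ψ : L → G` is a Cayley automatic representation of `G` (w.r.t. the
generating set `A`): `L ⊆ S*` is regular, `ψ` is a bijection from `L` onto `G`, and for every
`a ∈ A` the relation `R_a = {(ψ⁻¹(g), ψ⁻¹(g·a)) : g ∈ G}` is regular. -/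
def IsCayleyAutomaticRep (A : Set G) (L : Language (Alph A)) (ψ : List (Alph A) → G) : Prop :=
  Language.IsRegular L ∧ Set.BijOn ψ L Set.univ ∧
    ∀ a ∈ A, IsRegularRel {p : List (Alph A) × List (Alph A) |
      p.1 ∈ L ∧ p.2 ∈ L ∧ ψ p.2 = ψ p.1 * a}

/-- `G` is Cayley automatic with respect to the generating set `A`. -/
def IsCayleyAutomatic (A : Set G) : Prop :=
  ∃ (L : Language (Alph A)) (ψ : List (Alph A) → G), IsCayleyAutomaticRep A L ψ

/-- `G` is automatic (in the sense of Thurston) with respect to the generating set `A`: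
there is a regular language `L ⊆ S*` on which the canonical evaluation map `π` is a bijection
onto `G` and all the relations `R_a`, `a ∈ A`, are regular. -/
def IsAutomatic (A : Set G) : Prop :=
  ∃ L : Language (Alph A), IsCayleyAutomaticRep A L (eval A)

/-- The family `𝔉` of non-decreasing, non-negative real valued functions defined on a
final segment `[Q, ∞)` of `ℕ` (values below `Q` are irrelevant junk values). -/
structure FFun where
  Q : ℕ
  toFun : ℕ → ℝ
  nonneg : ∀ n, Q ≤ n → 0 ≤ toFun n
  mono : ∀ m n, Q ≤ m → m ≤ n → toFun m ≤ toFun n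

/-- `h ⪯ f` : there are positive integers `K, M, N`, with `[N,∞)` contained in the domains of
`h` and `f`, such that `h(n) ≤ K·f(M·n)` for all `n ≥ N`. -/
def FFun.Preceq (h f : FFun) : Prop :=
  ∃ K M N : ℕ, 0 < K ∧ 0 < M ∧ 0 < N ∧ h.Q ≤ N ∧ f.Q ≤ N ∧
    ∀ n, N ≤ n → h.toFun n ≤ K * f.toFun (M * n)

/-- `h ≍ f` iff `h ⪯ f` and `f ⪯ h`. -/
def FFun.Equiv (h f : FFun) : Prop := h.Preceq f ∧ f.Preceq h

/-- `h ≺ f` iff `h ⪯ f` and not `h ≍ f`. -/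
def FFun.Prec (h f : FFun) : Prop := h.Preceq f ∧ ¬ h.Equiv f

/-- `G ∈ ℬ_f` with respect to the generating set `A`: there is a Cayley automatic
representation `ψ : L → G` such that the function
`h(n) = max{d_A(π(w), ψ(w)) : w ∈ L, |w| ≤ n}` satisfies `h ⪯ f`
(stated equivalently: for some positive `K, M, N` with `N ≥ Q_f`, every `w ∈ L` with `|w| ≤ n`
and `n ≥ N` satisfies `d_A(π(w), ψ(w)) ≤ K·f(M·n)`). -/
def InB (A : Set G) (f : FFun) : Prop :=
  ∃ (L : Language (Alph A)) (ψ : List (Alph A) → G),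
    IsCayleyAutomaticRep A L ψ ∧
    ∃ K M N : ℕ, 0 < K ∧ 0 < M ∧ 0 < N ∧ f.Q ≤ N ∧
      ∀ n, N ≤ n → ∀ w ∈ L, w.length ≤ n →
        (cayleyDist A (eval A w) (ψ w) : ℝ) ≤ K * f.toFun (M * n)

/-- The identity function `𝔦(n) = n` as an element of `𝔉`. -/
def identF : FFun where
  Q := 1
  toFun n := n
  nonneg n _ := by positivity
  mono m n _ h := by simpa using (Nat.cast_le (α := ℝ)).mpr h

/-- The exponential function `𝔢(n) = exp n` as an element of `𝔉`. -/
noncomputable def expF : FFun where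
  Q := 1
  toFun n := Real.exp n
  nonneg n _ := (Real.exp_pos n).le
  mono m n _ h := Real.exp_le_exp.mpr (by exact_mod_cast h)

end CAG
namespace CAG

/-- The defining relation of the Baumslag–Solitar group `BS(p,q) = ⟨a,t | t aᵖ t⁻¹ = a^q⟩`,
with `a` the generator `0` and `t` the generator `1` of the free group on two generators. -/
def BSRels (p q : ℕ) : Set (FreeGroup (Fin 2)) :=
  {FreeGroup.of 1 * FreeGroup.of 0 ^ p * (FreeGroup.of 1)⁻¹ * (FreeGroup.of 0 ^ q)⁻¹}

/-- The Baumslag–Solitar group `BS(p,q) = ⟨a,t | t aᵖ t⁻¹ = a^q⟩`. -/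
abbrev BS (p q : ℕ) := PresentedGroup (BSRels p q)

/-- The generator `a` of `BS(p,q)`. -/
def BS.a (p q : ℕ) : BS p q := PresentedGroup.of 0

/-- The generator `t` of `BS(p,q)`. -/
def BS.t (p q : ℕ) : BS p q := PresentedGroup.of 1

/-- The alphabet of blocks `{t, at, …, a^{q-1}t, t⁻¹, at⁻¹, …, a^{p-1}t⁻¹}`:
`.inl i` stands for `aⁱt` (`0 ≤ i < q`) and `.inr j` stands for `aʲt⁻¹` (`0 ≤ j < p`). -/
abbrev BSBlock (p q : ℕ) := Fin q ⊕ Fin p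

/-- The word in the letters `a, t` (elements of `Fin 2 × Bool`, the letter `(x, b)` standing
for `x` if `b = true` and `x⁻¹` if `b = false`) spelled by a single block. -/
def BSBlock.letters {p q : ℕ} : BSBlock p q → List (Fin 2 × Bool)
  | .inl i => List.replicate i.val ((0 : Fin 2), true) ++ [((1 : Fin 2), true)]
  | .inr j => List.replicate j.val ((0 : Fin 2), true) ++ [((1 : Fin 2), false)]

/-- The word in the letters `a, t` spelled by a sequence of blocks. -/
def BSBlockWord {p q : ℕ} (bs : List (BSBlock p q)) : List (Fin 2 × Bool) :=
  (bs.map BSBlock.letters).flatten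

/-- A sequence of blocks is freely reduced if the word in `a, t` it spells is freely
reduced, i.e. it contains no subword `x x⁻¹` or `x⁻¹ x`. -/
def BSFreelyReduced {p q : ℕ} (bs : List (BSBlock p q)) : Prop :=
  FreeGroup.reduce (BSBlockWord bs) = BSBlockWord bs

/-- The element of `BS(p,q)` represented by a single block. -/
def BSBlock.elem {p q : ℕ} : BSBlock p q → BS p q
  | .inl i => BS.a p q ^ i.val * BS.t p q
  | .inr j => BS.a p q ^ j.val * (BS.t p q)⁻¹

end CAG


namespace CAG

section Regularity

/-- Almost-derivative criterion, first form. -/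
theorem isRegular_of_almost_deriv0 {Γ ι : Type*} [Finite Γ] [Finite ι] (L : ι → Language Γ) (N : ℕ)
    (h : ∀ i x, ∃ T : Set ι, ∀ w, N ≤ w.length → (x :: w ∈ L i ↔ ∃ j ∈ T, w ∈ L j)) (i : ι) :
    (L i).IsRegular := by
  have key : ∀ (u : List Γ) (i : ι), ∃ T : Set ι, ∀ w, N ≤ w.length →
      (u ++ w ∈ L i ↔ ∃ j ∈ T, w ∈ L j) := by
    intro u
    induction u with
    | nil => intro i; exact ⟨{i}, fun w _ => by simp⟩
    | cons x u ih =>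
      intro i
      obtain ⟨T, hT⟩ := h i x
      choose S hS using ih
      refine ⟨{k | ∃ j ∈ T, k ∈ S j}, fun w hw => ?_⟩
      rw [List.cons_append, hT _ (by simp; omega)]
      constructor
      · rintro ⟨j, hj, hw'⟩
        obtain ⟨k, hk, hk'⟩ := (hS j w hw).1 hw'
        exact ⟨k, ⟨j, hj, hk⟩, hk'⟩
      · rintro ⟨k, ⟨j, hj, hk⟩, hk'⟩
        exact ⟨j, hj, (hS j w hw).2 ⟨k, hk, hk'⟩⟩
  apply Language.IsRegular.of_finite_range_leftQuotient
  have hfin : ({w : List Γ | w.length < N}).Finite := List.finite_length_lt Γ N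
  let F : Set ι × Set (List Γ) → Language Γ := fun p =>
    {w | (N ≤ w.length ∧ ∃ j ∈ p.1, w ∈ L j) ∨ w ∈ p.2}
  refine Set.Finite.subset (((Set.finite_univ (α := Set ι)).prod hfin.powerset).image F) ?_
  rintro _ ⟨u, rfl⟩
  obtain ⟨T, hT⟩ := key u i
  refine ⟨(T, {w | w.length < N ∧ u ++ w ∈ L i}), ⟨Set.mem_univ _, fun w hw => hw.1⟩, ?_⟩
  apply Set.ext
  intro w
  change ((N ≤ w.length ∧ ∃ j ∈ T, w ∈ L j) ∨ (w.length < N ∧ u ++ w ∈ L i)) ↔ u ++ w ∈ L i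
  by_cases hw : N ≤ w.length
  · rw [hT w hw]
    simp [hw, Nat.not_lt.2 hw]
  · have : w.length < N := by omega
    tauto

/-- Almost-derivative criterion, with known regular remainders. -/
theorem isRegular_of_almost_deriv {Γ ι : Type*} [Finite Γ] [Finite ι] (L : ι → Language Γ) (N : ℕ)
    (h : ∀ i x, ∃ T : Set ι, ∃ K : Language Γ, K.IsRegular ∧
      ∀ w, N ≤ w.length → (x :: w ∈ L i ↔ w ∈ K ∨ ∃ j ∈ T, w ∈ L j)) (i : ι) :
    (L i).IsRegular := by
  choose T K hK hT using h
  let Q : Set (Language Γ) := ⋃ i, ⋃ x, Set.range (K i x).leftQuotient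
  have hQ : Q.Finite := Set.finite_iUnion fun i => Set.finite_iUnion fun x =>
    (hK i x).finite_range_leftQuotient
  have := hQ.to_subtype
  have main := isRegular_of_almost_deriv0 (ι := ι ⊕ Q)
    (fun s => match s with
      | .inl i => L i
      | .inr M => M.1) N ?_ (.inl i)
  · exact main
  · rintro (i | ⟨M, hM⟩) x
    · have hKQ : K i x ∈ Q := Set.mem_iUnion.2 ⟨i, Set.mem_iUnion.2 ⟨x, [], rfl⟩⟩
      refine ⟨insert (.inr ⟨K i x, hKQ⟩) (Sum.inl '' T i x), fun w hw => ?_⟩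
      simp [hT i x w hw]
    · have hMQ : M.leftQuotient [x] ∈ Q := by
        obtain ⟨j, hj⟩ := Set.mem_iUnion.1 hM
        obtain ⟨y, u, rfl⟩ := Set.mem_iUnion.1 hj
        exact Set.mem_iUnion.2 ⟨j, Set.mem_iUnion.2 ⟨y, u ++ [x],
          Language.leftQuotient_append _ _ _⟩⟩
      refine ⟨{.inr ⟨_, hMQ⟩}, fun w hw => ?_⟩
      simp

/-- If all letter derivatives of a language are eventually regular, it is regular. -/
theorem isRegular_of_deriv {Γ : Type*} [Finite Γ] (L : Language Γ) (N : ℕ)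
    (h : ∀ x, ∃ K : Language Γ, K.IsRegular ∧ ∀ w, N ≤ w.length → (x :: w ∈ L ↔ w ∈ K)) :
    L.IsRegular := by
  refine isRegular_of_almost_deriv (ι := Unit) (fun _ => L) N (fun _ x => ?_) ()
  obtain ⟨K, hK, h⟩ := h x
  exact ⟨∅, K, hK, fun w hw => by simp [h w hw]⟩

theorem isRegular_empty {Γ : Type*} [Finite Γ] : Language.IsRegular (∅ : Set (List Γ)) :=
  isRegular_of_almost_deriv0 (ι := Unit) (fun _ => (∅ : Set (List Γ))) 0
    (fun _ x => ⟨∅, fun w _ => by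
      constructor
      · intro h; exact absurd h (Set.notMem_empty _)
      · rintro ⟨j, hj, _⟩; exact absurd hj (Set.notMem_empty _)⟩) ()

/-- Images of regular languages under nonerasing homomorphisms are regular. -/
theorem isRegular_flatMap {Γ S : Type*} [Finite Γ] [Finite S] (h : Γ → List S)
    (hne : ∀ x, h x ≠ []) (L : Language Γ) (hL : L.IsRegular) :
    Language.IsRegular {w | ∃ u ∈ L, w = u.flatMap h} := by
  let Q := Set.range L.leftQuotient
  have hQ : Q.Finite := hL.finite_range_leftQuotient
  let Su : Set (List S) := insert [] (⋃ x, {s | s ∈ (h x).tails})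
  have hSu : Su.Finite := (Set.finite_iUnion fun x => List.finite_toSet _).insert _
  have := hQ.to_subtype
  have := hSu.to_subtype
  have main := isRegular_of_almost_deriv0 (Γ := S) (ι := Q × Su)
    (fun i => {w | ∃ u ∈ i.1.1, w = i.2.1 ++ u.flatMap h}) 0 ?_
      (⟨L, [], rfl⟩, ⟨[], Set.mem_insert _ _⟩)
  · simpa using main
  · rintro ⟨⟨M, hM⟩, ⟨s, hs⟩⟩ y
    refine ⟨{i | (s = y :: i.2.1 ∧ i.1.1 = M) ∨
      (s = [] ∧ ∃ x, h x = y :: i.2.1 ∧ i.1.1 = M.leftQuotient [x])}, fun w _ => ?_⟩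
    constructor
    · rintro ⟨u, hu, hw⟩
      cases s with
      | nil =>
        cases u with
        | nil => simp at hw
        | cons x u =>
          obtain ⟨s', hs'⟩ : ∃ s', h x = y :: s' := by
            cases hx : h x with
            | nil => exact absurd hx (hne x)
            | cons z s' => simp [hx] at hw; exact ⟨s', by rw [hw.1]⟩
          have h1 : M.leftQuotient [x] ∈ Q := by
            obtain ⟨v, rfl⟩ := hM
            exact ⟨v ++ [x], Language.leftQuotient_append _ _ _⟩
          have h2 : s' ∈ Su := by
            refine Set.mem_insert_of_mem _ (Set.mem_iUnion.2 ⟨x, ?_⟩)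
            simp [hs']
          refine ⟨(⟨_, h1⟩, ⟨s', h2⟩), .inr ⟨rfl, x, hs', rfl⟩, u, hu, ?_⟩
          simp [hs'] at hw
          simpa using hw
      | cons z s =>
        simp at hw
        obtain ⟨rfl, rfl⟩ := hw
        have h2 : s ∈ Su := by
          rcases hs with hs | hs
          · simp at hs
          · obtain ⟨x, hx⟩ := Set.mem_iUnion.1 hs
            refine Set.mem_insert_of_mem _ (Set.mem_iUnion.2 ⟨x, ?_⟩)
            simp at hx ⊢
            exact (List.suffix_cons _ _).trans hx
        exact ⟨(⟨M, hM⟩, ⟨s, h2⟩), .inl ⟨rfl, rfl⟩, u, hu, rfl⟩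
    · rintro ⟨⟨⟨M', hM'⟩, ⟨s', hs'⟩⟩, (⟨h1, h2⟩ | ⟨h1, x, h2, h3⟩), u, hu, rfl⟩
      · simp only at h1 h2 hu ⊢
        subst h2
        exact ⟨u, hu, by rw [h1]; rfl⟩
      · simp only at h1 h2 h3 hu ⊢
        subst h3
        exact ⟨x :: u, hu, by simp [h1, h2]⟩

/-- Extension of a coding to the padded pair alphabet. -/
def codePair {Γ S : Type*} (h : Γ → List S) : Option Γ × Option Γ → List (Option S × Option S)
  | (some x, some y) => conv (h x) (h y)
  | (some x, none) => conv (h x) []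
  | (none, some y) => conv [] (h y)
  | (none, none) => [(none, none)]

theorem conv_append {S : Type*} (u u' v v' : List S) (h : u.length = v.length) :
    conv (u ++ u') (v ++ v') = conv u v ++ conv u' v' := by
  induction u generalizing v with
  | nil => cases v with
    | nil => simp [conv]
    | cons => simp at h
  | cons a u ih => cases v with
    | nil => simp at h
    | cons b v => simp [conv, ih v (by simpa using h)]

theorem conv_append_nil {S : Type*} (u u' : List S) :
    conv (u ++ u') [] = conv u [] ++ conv u' [] := by
  induction u with
  | nil => simp [conv]
  | cons a u ih => simp [conv, ih]

theorem conv_nil_append {S : Type*} (u u' : List S) :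
    conv [] (u ++ u') = conv [] u ++ conv [] u' := by
  induction u with
  | nil => simp [conv]
  | cons a u ih => simp [conv, ih]

theorem length_conv {S : Type*} (u v : List S) :
    (conv u v).length = max u.length v.length := by
  induction u generalizing v with
  | nil => induction v with
    | nil => simp [conv]
    | cons a v ih => simp at ih; simp [conv, ih]
  | cons a u ih => cases v with
    | nil => have := ih []; simp at this; simp [conv, this]
    | cons b v => simp [conv, ih v]

theorem conv_flatMap {Γ S : Type*} (h : Γ → List S) (l : ℕ) (hl : ∀ x, (h x).length = l)
    (u v : List Γ) : conv (u.flatMap h) (v.flatMap h) = (conv u v).flatMap (codePair h) := by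
  induction u generalizing v with
  | nil => induction v with
    | nil => simp [conv]
    | cons b v ih => simp at ih; simp [conv, codePair, conv_nil_append, ih]
  | cons a u ih => cases v with
    | nil => have := ih []; simp at this; simp [conv, codePair, conv_append_nil, this]
    | cons b v =>
      simp [conv, codePair, ← ih v]
      exact conv_append _ _ _ _ (by rw [hl, hl])

/-- Transfer of regularity of a relation through a uniform coding. -/
theorem isRegularRel_code {Γ S : Type*} [Finite Γ] [Finite S] (h : Γ → List S) (l : ℕ)
    (hl0 : 0 < l) (hl : ∀ x, (h x).length = l) {X : Type*} (f g : X → List Γ)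
    (hR : Language.IsRegular {w | ∃ x, w = conv (f x) (g x)}) :
    Language.IsRegular {w | ∃ x, w = conv ((f x).flatMap h) ((g x).flatMap h)} := by
  have hne : ∀ x, codePair h x ≠ [] := by
    have h0 : ∀ x, h x ≠ [] := fun x hx => by have := hl x; simp [hx] at this; omega
    rintro ⟨_ | x, _ | y⟩ he
    all_goals
      have := congrArg List.length he
      simp [codePair, length_conv, hl] at this
      try omega
  have := isRegular_flatMap (codePair h) hne _ hR
  refine Eq.mpr (congrArg Language.IsRegular (Set.ext fun w => ?_)) this
  constructor
  · rintro ⟨x, rfl⟩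
    exact ⟨_, ⟨x, rfl⟩, conv_flatMap h l hl _ _⟩
  · rintro ⟨_, ⟨x, rfl⟩, rfl⟩
    exact ⟨x, (conv_flatMap h l hl _ _).symm⟩

end Regularity

end CAG

namespace CAG

section Encoding

set_option linter.unusedSectionVars false

variable (p q : ℕ) [hp : Fact (1 ≤ p)] [hpq : Fact (p < q)]

/-- The working alphabet: blocks, `q`-ary digits and two signs. -/
abbrev Sym := BSBlock p q ⊕ (Fin q ⊕ Bool)

variable {p q}

/-- A block as a symbol. -/
abbrev blk (b : BSBlock p q) : Sym p q := .inl b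

/-- A digit as a symbol. -/
abbrev dig (x : Fin q) : Sym p q := .inr (.inl x)

/-- A sign as a symbol. -/
abbrev sgn (s : Bool) : Sym p q := .inr (.inr s)

theorem digit_aux (p : ℕ) {q : ℕ} [hpq : Fact (p < q)] (k : ℤ) : (k % (q : ℤ)).toNat < q := by
  have h := hpq.out
  have h1 := Int.emod_nonneg k (b := (q : ℤ)) (by omega)
  have h2 := Int.emod_lt_of_pos k (b := (q : ℤ)) (by omega)
  omega

variable (p) in
/-- The last `q`-ary digit of an integer. -/
def dq (k : ℤ) : Fin q := ⟨(k % (q : ℤ)).toNat, digit_aux p k⟩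

theorem dq_val (k : ℤ) : (((dq p k : Fin q) : ℕ) : ℤ) = k % q := by
  have h := hpq.out
  have h1 := Int.emod_nonneg k (b := (q : ℤ)) (by omega)
  simp only [dq]
  omega

theorem enc_aux (k : ℤ) (h0 : k ≠ 0) (h1 : k ≠ -1) (hq : 2 ≤ q) :
    (k / (q : ℤ)).natAbs < k.natAbs := by
  have e := Int.mul_ediv_add_emod k q
  have h2 := Int.emod_nonneg k (b := (q : ℤ)) (by omega)
  have h3 := Int.emod_lt_of_pos k (b := (q : ℤ)) (by omega)
  generalize k / (q : ℤ) = d at *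
  generalize k % (q : ℤ) = r at *
  have hq' : (2 : ℤ) ≤ q := by exact_mod_cast hq
  rcases lt_trichotomy d 0 with hd | hd | hd
  · have : (q : ℤ) * d + r ≤ d := by nlinarith
    by_cases hk : k = d
    · exfalso
      have : ((q : ℤ) - 1) * d + r = 0 := by linarith
      have : d = -1 := by
        by_contra hne
        have : d ≤ -2 := by omega
        nlinarith
      omega
    · omega
  · subst hd
    omega
  · have : d < (q : ℤ) * d + r := by nlinarith
    omega

theorem two_le_q {p q : ℕ} [hp : Fact (1 ≤ p)] [hpq : Fact (p < q)] : 2 ≤ q := by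
  have := hp.out
  have := hpq.out
  omega

theorem two_le_q' (p q : ℕ) (hp : Fact (1 ≤ p)) (hpq : Fact (p < q)) : 2 ≤ q := two_le_q (p := p)

/-- Encoding of integers by `q`-ary digits, least significant first, with final sign. -/
def enc (p q : ℕ) [hp : Fact (1 ≤ p)] [hpq : Fact (p < q)] (k : ℤ) : List (Sym p q) :=
  if h0 : k = 0 then [sgn true]
  else if h1 : k = -1 then [sgn false]
  else dig (dq p k) :: enc p q (k / (q : ℤ))
termination_by k.natAbs
decreasing_by exact enc_aux k h0 h1 (two_le_q' p q hp hpq)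

theorem enc_zero : enc p q 0 = [sgn true] := by
  rw [enc]; simp

theorem enc_neg_one : enc p q (-1) = [sgn false] := by
  rw [enc]; simp

theorem enc_cons (k : ℤ) (h0 : k ≠ 0) (h1 : k ≠ -1) :
    enc p q k = dig (dq p k) :: enc p q (k / (q : ℤ)) := by
  rw [enc]; simp [h0, h1]

theorem digit_div (x : Fin q) (m : ℤ) : ((x : ℕ) + (q : ℤ) * m) / (q : ℤ) = m := by
  have := x.2
  rw [Int.add_mul_ediv_left _ _ (by omega), Int.ediv_eq_zero_of_lt (by omega) (by omega)]
  simp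

theorem digit_mod (x : Fin q) (m : ℤ) : dq p ((x : ℕ) + (q : ℤ) * m) = x := by
  have := x.2
  apply Fin.ext
  have h := dq_val (p := p) (q := q) ((x : ℕ) + (q : ℤ) * m)
  rw [Int.add_mul_emod_self_left, Int.emod_eq_of_lt (by omega) (by omega)] at h
  exact_mod_cast h

theorem digit_decomp (k : ℤ) : k = ((dq p k : Fin q) : ℕ) + (q : ℤ) * (k / q) := by
  rw [dq_val]
  exact (Int.emod_add_mul_ediv k q).symm

theorem enc_mul_add (x : Fin q) (m : ℤ) (h0 : m ≠ 0) (h1 : m ≠ -1) :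
    enc p q ((x : ℕ) + (q : ℤ) * m) = dig x :: enc p q m := by
  have hx := x.2
  rw [enc_cons _ ?_ ?_, digit_div, digit_mod]
  · intro h
    have := digit_div x m
    rw [h] at this
    simp at this
    omega
  · intro h
    have := digit_div x m
    rw [h, Int.neg_one_ediv, Int.sign_eq_one_of_pos (by omega)] at this
    omega

theorem enc_length_bound (k : ℤ) :
    -((q : ℤ) ^ (enc p q k).length) ≤ k ∧ k < (q : ℤ) ^ (enc p q k).length := by
  have hq : (2 : ℤ) ≤ q := by exact_mod_cast two_le_q (p := p)
  induction hl : (enc p q k).length generalizing k with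
  | zero =>
    by_cases h0 : k = 0
    · subst h0; simp [enc_zero] at hl
    by_cases h1 : k = -1
    · subst h1; simp [enc_neg_one] at hl
    simp [enc_cons k h0 h1] at hl
  | succ l ih =>
    have hpos : (1 : ℤ) ≤ (q : ℤ) ^ (l + 1) := one_le_pow₀ (by omega)
    by_cases h0 : k = 0
    · subst h0; omega
    by_cases h1 : k = -1
    · subst h1; omega
    simp [enc_cons k h0 h1] at hl
    have h := ih _ hl
    have e := digit_decomp (p := p) (q := q) k
    have hd := (dq p k : Fin q).2
    generalize k / (q : ℤ) = d at *
    generalize (dq p k : Fin q) = r at *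
    rw [pow_succ]
    obtain ⟨h2, h3⟩ := h
    have hd' : ((r : ℕ) : ℤ) < q := by exact_mod_cast hd
    have hd0 : (0 : ℤ) ≤ ((r : ℕ) : ℤ) := by positivity
    have h4 : d + 1 ≤ (q : ℤ) ^ l := h3
    have h5 := mul_le_mul_of_nonneg_left h4 (show (0 : ℤ) ≤ q by omega)
    have h6 := mul_le_mul_of_nonneg_left h2 (show (0 : ℤ) ≤ q by omega)
    constructor <;> nlinarith

theorem enc_short (B : ℤ) : ∃ N, ∀ k : ℤ, -B ≤ k → k ≤ B → (enc p q k).length < N := by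
  obtain ⟨N, hN⟩ := ((Set.finite_Icc (-B) B).image fun k => (enc p q k).length).bddAbove
  exact ⟨N + 1, fun k h1 h2 => Nat.lt_succ_of_le (hN ⟨k, ⟨h1, h2⟩, rfl⟩)⟩

theorem enc_head (k : ℤ) : ∃ (s : Fin q ⊕ Bool) (w : List (Sym p q)), enc p q k = .inr s :: w := by
  by_cases h0 : k = 0
  · subst h0; exact ⟨_, _, enc_zero⟩
  by_cases h1 : k = -1
  · subst h1; exact ⟨_, _, enc_neg_one⟩
  exact ⟨_, _, enc_cons k h0 h1⟩

theorem enc_injective : Function.Injective (enc p q) := by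
  intro k k' h
  induction hl : (enc p q k).length generalizing k k' with
  | zero =>
    obtain ⟨s, w, e⟩ := enc_head (p := p) (q := q) k
    simp [e] at hl
  | succ l ih =>
    by_cases h0 : k = 0
    · subst h0
      by_cases h0' : k' = 0
      · exact h0'.symm
      by_cases h1' : k' = -1
      · subst h1'; simp [enc_zero, enc_neg_one] at h
      simp [enc_zero, enc_cons k' h0' h1'] at h
    by_cases h1 : k = -1
    · subst h1
      by_cases h0' : k' = 0
      · subst h0'; simp [enc_zero, enc_neg_one] at h
      by_cases h1' : k' = -1
      · exact h1'.symm
      simp [enc_neg_one, enc_cons k' h0' h1'] at h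
    by_cases h0' : k' = 0
    · subst h0'; simp [enc_zero, enc_cons k h0 h1] at h
    by_cases h1' : k' = -1
    · subst h1'; simp [enc_neg_one, enc_cons k h0 h1] at h
    rw [enc_cons k h0 h1, enc_cons k' h0' h1'] at h
    simp only [List.cons.injEq, Sum.inr.injEq, Sum.inl.injEq] at h
    rw [enc_cons k h0 h1] at hl
    have := ih h.2 (by simpa using hl)
    rw [digit_decomp (p := p) (q := q) k, digit_decomp (p := p) (q := q) k', this, h.1]

variable (p q) in
/-- The language of integer encodings. -/
def EncL : Language (Sym p q) := {w | ∃ k, w = enc p q k}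

theorem EncL_regular : (EncL p q).IsRegular := by
  refine isRegular_of_almost_deriv0 (ι := Unit) (fun _ => EncL p q) 2 (fun _ X => ?_) ()
  refine ⟨{_i | ∃ x, X = dig x}, fun w hw => ?_⟩
  constructor
  · rintro ⟨k, hk⟩
    by_cases h0 : k = 0
    · subst h0; simp [enc_zero] at hk; simp [hk] at hw
    by_cases h1 : k = -1
    · subst h1; simp [enc_neg_one] at hk; simp [hk] at hw
    rw [enc_cons k h0 h1] at hk
    simp only [List.cons.injEq] at hk
    exact ⟨(), ⟨_, hk.1⟩, _, hk.2⟩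
  · rintro ⟨_, ⟨x, rfl⟩, k, rfl⟩
    refine ⟨(x : ℕ) + (q : ℤ) * k, (enc_mul_add x k ?_ ?_).symm⟩
    · rintro rfl; simp [enc_zero] at hw
    · rintro rfl; simp [enc_neg_one] at hw

variable (p q) in
/-- The language of pairs of encodings of `m, n` with `β n = c m + e`. -/
def LinL (β c e : ℤ) : Language (Option (Sym p q) × Option (Sym p q)) :=
  {w | ∃ m n : ℤ, β * n = c * m + e ∧ w = conv (enc p q m) (enc p q n)}

theorem LinL_regular (β c e₀ : ℤ) (hβ : 1 ≤ β) (hc : 1 ≤ c) : (LinL p q β c e₀).IsRegular := by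
  have hq : (2 : ℤ) ≤ q := by exact_mod_cast two_le_q (p := p)
  let E : ℤ := max |e₀| (2 * (c + β))
  have hE1 : |e₀| ≤ E := le_max_left _ _
  have hE2 : 2 * (c + β) ≤ E := le_max_right _ _
  obtain ⟨N, hN⟩ := enc_short (p := p) (q := q) (E + β + c)
  have long : ∀ e m n : ℤ, -E ≤ e → e ≤ E → β * n = c * m + e →
      N ≤ (conv (enc p q m) (enc p q n)).length → (m ≠ 0 ∧ m ≠ -1) ∧ (n ≠ 0 ∧ n ≠ -1) := by
    intro e m n h1 h2 h3 h4
    rw [length_conv] at h4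
    by_contra hcon
    have : (m = 0 ∨ m = -1) ∨ (n = 0 ∨ n = -1) := by tauto
    have hb : (-(E + β + c) ≤ m ∧ m ≤ E + β + c) ∧ (-(E + β + c) ≤ n ∧ n ≤ E + β + c) := by
      rcases this with (rfl | rfl) | (rfl | rfl)
      · refine ⟨by constructor <;> omega, ?_, ?_⟩ <;> by_contra hh <;> nlinarith
      · refine ⟨by constructor <;> omega, ?_, ?_⟩ <;> by_contra hh <;> nlinarith
      · refine ⟨⟨?_, ?_⟩, by constructor <;> omega⟩ <;> by_contra hh <;> nlinarith
      · refine ⟨⟨?_, ?_⟩, by constructor <;> omega⟩ <;> by_contra hh <;> nlinarith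
    have hm := hN m hb.1.1 hb.1.2
    have hn := hN n hb.2.1 hb.2.2
    omega
  have main := isRegular_of_almost_deriv0 (ι := Set.Icc (-E) E)
    (fun e => LinL p q β c e.1) N ?_ ⟨e₀, abs_le.1 hE1⟩
  · exact main
  · rintro ⟨e, he1, he2⟩ X
    refine ⟨{e' | ∃ x y : Fin q, X = (some (dig x), some (dig y)) ∧
      c * (x : ℕ) + e - β * (y : ℕ) = q * e'.1}, fun w hw => ?_⟩
    constructor
    · rintro ⟨m, n, hmn, hk⟩
      obtain ⟨⟨m0, m1⟩, n0, n1⟩ := long e m n he1 he2 hmn (by rw [← hk]; simp; omega)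
      rw [enc_cons m m0 m1, enc_cons n n0 n1] at hk
      simp only [conv, List.cons.injEq] at hk
      have em := digit_decomp (p := p) (q := q) m
      have en := digit_decomp (p := p) (q := q) n
      have hx := (dq p m : Fin q).2
      have hy := (dq p n : Fin q).2
      generalize m / (q : ℤ) = m' at *
      generalize n / (q : ℤ) = n' at *
      generalize (dq p m : Fin q) = x at *
      generalize (dq p n : Fin q) = y at *
      have hx' : ((x : ℕ) : ℤ) < q := by exact_mod_cast hx
      have hy' : ((y : ℕ) : ℤ) < q := by exact_mod_cast hy
      have hx0 : (0 : ℤ) ≤ ((x : ℕ) : ℤ) := by positivity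
      have hy0 : (0 : ℤ) ≤ ((y : ℕ) : ℤ) := by positivity
      have hqe : c * (x : ℕ) + e - β * (y : ℕ) = q * (β * n' - c * m') := by
        rw [em, en] at hmn; linarith
      refine ⟨⟨β * n' - c * m', ?_, ?_⟩, ⟨x, y, hk.1, hqe⟩, m', n', by simp, hk.2⟩
      · by_contra hh
        push Not at hh
        generalize β * n' - c * m' = e' at *
        have h1 : c * (x : ℕ) ≥ 0 := by positivity
        have h2 : β * (y : ℕ) ≤ β * q := by nlinarith
        nlinarith
      · by_contra hh
        push Not at hh
        generalize β * n' - c * m' = e' at *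
        have h1 : c * (x : ℕ) ≤ c * q := by nlinarith
        have h2 : β * (y : ℕ) ≥ 0 := by positivity
        nlinarith
    · rintro ⟨⟨e', he'1, he'2⟩, ⟨x, y, rfl, hxy⟩, m, n, hmn, rfl⟩
      obtain ⟨⟨m0, m1⟩, n0, n1⟩ := long e' m n he'1 he'2 hmn hw
      refine ⟨(x : ℕ) + (q : ℤ) * m, (y : ℕ) + (q : ℤ) * n, ?_, ?_⟩
      · simp only at hxy hmn ⊢
        linear_combination q * hmn - hxy
      · rw [enc_mul_add x m m0 m1, enc_mul_add y n n0 n1]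
        simp [conv]

end Encoding

end CAG

namespace CAG

section NormalForm

set_option linter.unusedSectionVars false

variable (p q : ℕ) [hp : Fact (1 ≤ p)] [hpq : Fact (p < q)]

variable {p q}

/-- The block `b` may follow the (optional) last block. -/
def okBlk : Option (BSBlock p q) → BSBlock p q → Prop
  | some (.inl _), .inr j => j.val ≠ 0
  | some (.inr _), .inl i => i.val ≠ 0
  | _, _ => True

/-- A list of blocks is admissible after `s`. -/
def okChain : Option (BSBlock p q) → List (BSBlock p q) → Prop
  | _, [] => True
  | s, b :: bs => okBlk s b ∧ okChain (some b) bs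

/-- The last block after reading a list. -/
def lastBlk : Option (BSBlock p q) → List (BSBlock p q) → Option (BSBlock p q)
  | s, [] => s
  | _, b :: bs => lastBlk (some b) bs

theorem okChain_snoc (s : Option (BSBlock p q)) (bs : List (BSBlock p q)) (b : BSBlock p q) :
    okChain s (bs ++ [b]) ↔ okChain s bs ∧ okBlk (lastBlk s bs) b := by
  induction bs generalizing s with
  | nil => simp [okChain, lastBlk]
  | cons c bs ih => simp [okChain, lastBlk, ih, and_assoc]

theorem lastBlk_snoc (s : Option (BSBlock p q)) (bs : List (BSBlock p q)) (b : BSBlock p q) :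
    lastBlk s (bs ++ [b]) = some b := by
  induction bs generalizing s with
  | nil => simp [lastBlk]
  | cons c bs ih => simp [lastBlk, ih]

/-- Reduced stacks of blocks (last block first). -/
def redStack : List (BSBlock p q) → Prop
  | [] => True
  | b :: st => redStack st ∧ okBlk st.head? b

theorem lastBlk_reverse (st : List (BSBlock p q)) : lastBlk none st.reverse = st.head? := by
  cases st with
  | nil => simp [lastBlk]
  | cons b st => simp [lastBlk_snoc]

theorem okChain_reverse (st : List (BSBlock p q)) : okChain none st.reverse ↔ redStack st := by
  induction st with
  | nil => simp [okChain, redStack]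
  | cons b st ih => simp [okChain_snoc, redStack, ih, lastBlk_reverse]

theorem isRegular_leftQuotient {Γ : Type*} (L : Language Γ) (hL : L.IsRegular) (u : List Γ) :
    (L.leftQuotient u).IsRegular := by
  apply Language.IsRegular.of_finite_range_leftQuotient
  refine hL.finite_range_leftQuotient.subset ?_
  rintro _ ⟨v, rfl⟩
  exact ⟨u ++ v, Language.leftQuotient_append _ _ _⟩

/-- Languages consisting of an admissible block sequence followed by a word of a regular
language depending on the last block. -/
theorem isRegular_prefix {Γ : Type*} [Finite Γ] (f : BSBlock p q → Γ)
    (K : Option (BSBlock p q) → Language Γ) (hK : ∀ s, (K s).IsRegular)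
    (s : Option (BSBlock p q)) :
    Language.IsRegular {w | ∃ bs, okChain s bs ∧ ∃ v ∈ K (lastBlk s bs), w = bs.map f ++ v} := by
  refine isRegular_of_almost_deriv
    (fun s => {w | ∃ bs, okChain s bs ∧ ∃ v ∈ K (lastBlk s bs), w = bs.map f ++ v}) 0 ?_ s
  intro s X
  refine ⟨{s' | ∃ b, s' = some b ∧ okBlk s b ∧ X = f b}, (K s).leftQuotient [X],
    isRegular_leftQuotient _ (hK s) _, fun w _ => ?_⟩
  constructor
  · rintro ⟨bs, hbs, v, hv, hw⟩
    cases bs with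
    | nil =>
      left
      simp only [List.map_nil, List.nil_append] at hw
      subst hw
      exact hv
    | cons b bs =>
      right
      simp only [List.map_cons, List.cons_append, List.cons.injEq] at hw
      exact ⟨some b, ⟨b, rfl, hbs.1, hw.1⟩, bs, hbs.2, v, hv, hw.2⟩
  · rintro (h | ⟨_, ⟨b, rfl, hb, rfl⟩, bs, hbs, v, hv, rfl⟩)
    · exact ⟨[], trivial, X :: w, h, rfl⟩
    · exact ⟨b :: bs, ⟨hb, hbs⟩, v, hv, rfl⟩

/-- Pairs arising when a block `aʳ t` is appended. -/
def K1 (p q : ℕ) [Fact (1 ≤ p)] [Fact (p < q)] (s : Option (BSBlock p q)) :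
    Language (Option (Sym p q) × Option (Sym p q)) :=
  {w | ∃ (r : Fin q) (d : ℤ), okBlk s (.inl r) ∧
    w = conv (enc p q ((r : ℕ) + (q : ℤ) * d)) (blk (.inl r) :: enc p q ((p : ℤ) * d))}

theorem K1_regular (s : Option (BSBlock p q)) : (K1 p q s).IsRegular := by
  have hp1 := hp.out
  have hpq1 := hpq.out
  obtain ⟨N, hN⟩ := enc_short (p := p) (q := q) (p + q)
  refine isRegular_of_deriv _ (N + 1) fun X => ?_
  by_cases hX : ∃ r : Fin q, okBlk s (.inl r) ∧ X = (some (dig r), some (blk (.inl r)))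
  · refine ⟨_, LinL_regular 1 p 0 le_rfl (by exact_mod_cast hp1), fun w hw => ?_⟩
    obtain ⟨r, hr, rfl⟩ := hX
    have hr2 := r.2
    constructor
    · rintro ⟨r', d, hr', h⟩
      have hd : d ≠ 0 ∧ d ≠ -1 := by
        by_contra hcon
        have hd : d = 0 ∨ d = -1 := by tauto
        have hl := congrArg List.length h
        have h1 := hN ((r' : ℕ) + (q : ℤ) * d) (by rcases hd with rfl | rfl <;> omega)
          (by rcases hd with rfl | rfl <;> omega)
        have h2 := hN ((p : ℤ) * d) (by rcases hd with rfl | rfl <;> omega)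
          (by rcases hd with rfl | rfl <;> omega)
        simp [length_conv] at hl
        omega
      rw [enc_mul_add r' d hd.1 hd.2] at h
      simp only [conv, List.cons.injEq] at h
      exact ⟨d, p * d, by ring, h.2⟩
    · rintro ⟨m, n, hmn, rfl⟩
      obtain rfl : n = p * m := by linarith
      have hd : m ≠ 0 ∧ m ≠ -1 := by
        by_contra hcon
        have hd : m = 0 ∨ m = -1 := by tauto
        have h1 := hN m (by rcases hd with rfl | rfl <;> omega)
          (by rcases hd with rfl | rfl <;> omega)
        have h2 := hN ((p : ℤ) * m) (by rcases hd with rfl | rfl <;> omega)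
          (by rcases hd with rfl | rfl <;> omega)
        simp [length_conv] at hw
        omega
      exact ⟨r, m, hr, by rw [enc_mul_add r m hd.1 hd.2]; simp [conv]⟩
  · refine ⟨_, isRegular_empty, fun w hw => ?_⟩
    constructor
    · rintro ⟨r', d, hr', h⟩
      have hr2 := r'.2
      exfalso
      have hd : d ≠ 0 ∧ d ≠ -1 := by
        by_contra hcon
        have hd : d = 0 ∨ d = -1 := by tauto
        have hl := congrArg List.length h
        have h1 := hN ((r' : ℕ) + (q : ℤ) * d) (by rcases hd with rfl | rfl <;> omega)
          (by rcases hd with rfl | rfl <;> omega)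
        have h2 := hN ((p : ℤ) * d) (by rcases hd with rfl | rfl <;> omega)
          (by rcases hd with rfl | rfl <;> omega)
        simp [length_conv] at hl
        omega
      rw [enc_mul_add r' d hd.1 hd.2] at h
      simp only [conv, List.cons.injEq] at h
      exact hX ⟨r', hr', h.1⟩
    · intro h
      exact absurd h (Set.notMem_empty _)

/-- Auxiliary language for the cancellation case. -/
def K2aux (p q : ℕ) [Fact (1 ≤ p)] [Fact (p < q)] (f : ℤ) :
    Language (Option (Sym p q) × Option (Sym p q)) :=
  {w | ∃ d n : ℤ, (q : ℤ) * n = p * d + f ∧ w = conv (enc p q ((q : ℤ) * d)) (enc p q n)}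

theorem K2aux_regular (f : ℤ) : (K2aux p q f).IsRegular := by
  have hp1 : (1 : ℤ) ≤ p := by exact_mod_cast hp.out
  have hpq1 : (p : ℤ) < q := by exact_mod_cast hpq.out
  have hf0 := abs_nonneg f
  have hf1 := neg_abs_le f
  have hf2 := le_abs_self f
  -- a bound good for everything
  obtain ⟨N, hN⟩ := enc_short (p := p) (q := q) ((q : ℤ) * (q ^ 2 + |f| + q ^ 2 + p + q))
  have hqq : (q : ℤ) ≤ q ^ 2 := by nlinarith
  have bnd : ∀ x : ℤ, -(q ^ 2 + |f| + q ^ 2 + p + q) ≤ x → x ≤ (q ^ 2 + |f| + q ^ 2 + p + q) →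
      (enc p q x).length < N ∧ (enc p q (q * x)).length < N := by
    intro x h1 h2
    constructor
    · apply hN <;> nlinarith
    · apply hN <;> nlinarith
  have long : ∀ d n : ℤ, (q : ℤ) * n = p * d + f →
      N ≤ (conv (enc p q ((q : ℤ) * d)) (enc p q n)).length →
      (d ≠ 0 ∧ d ≠ -1) ∧ (n ≠ 0 ∧ n ≠ -1) := by
    intro d n h hl
    rw [length_conv] at hl
    by_contra hcon
    have : (d = 0 ∨ d = -1) ∨ (n = 0 ∨ n = -1) := by tauto
    have hb : (-(q ^ 2 + |f| + q ^ 2 + p + q) ≤ d ∧ d ≤ q ^ 2 + |f| + q ^ 2 + p + q) ∧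
        (-(q ^ 2 + |f| + q ^ 2 + p + q) ≤ n ∧ n ≤ q ^ 2 + |f| + q ^ 2 + p + q) := by
      rcases this with (rfl | rfl) | (rfl | rfl)
      · refine ⟨by constructor <;> nlinarith, ?_, ?_⟩ <;> by_contra hh <;> nlinarith
      · refine ⟨by constructor <;> nlinarith, ?_, ?_⟩ <;> by_contra hh <;> nlinarith
      · refine ⟨⟨?_, ?_⟩, by constructor <;> nlinarith⟩ <;> by_contra hh <;> nlinarith
      · refine ⟨⟨?_, ?_⟩, by constructor <;> nlinarith⟩ <;> by_contra hh <;> nlinarith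
    have h1 := bnd d hb.1.1 hb.1.2
    have h2 := bnd n hb.2.1 hb.2.2
    omega
  have hq0 : 0 < q := by have := hpq.out; omega
  have encq : ∀ d : ℤ, d ≠ 0 → d ≠ -1 → enc p q ((q : ℤ) * d) = dig ⟨0, hq0⟩ :: enc p q d := by
    intro d h0 h1
    have := enc_mul_add (p := p) (⟨0, hq0⟩ : Fin q) d h0 h1
    simpa using this
  obtain ⟨N', hN'⟩ := enc_short (p := p) (q := q) (q ^ 2 + |f| + q ^ 2 + p + q)
  refine isRegular_of_deriv _ (N + N') fun X => ?_
  by_cases hX : ∃ y : Fin q, X = (some (dig ⟨0, hq0⟩), some (dig y))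
  · obtain ⟨y, rfl⟩ := hX
    have hy2 : ((y : ℕ) : ℤ) < q := by exact_mod_cast y.2
    have hy0 : (0 : ℤ) ≤ ((y : ℕ) : ℤ) := by positivity
    refine ⟨_, LinL_regular (q ^ 2) p (f - q * (y : ℕ)) (by nlinarith) hp1, fun w hw => ?_⟩
    constructor
    · rintro ⟨d, n, h, he⟩
      obtain ⟨⟨d0, d1⟩, n0, n1⟩ := long d n h (by rw [← he]; simp; omega)
      rw [encq d d0 d1, enc_cons n n0 n1] at he
      simp only [conv, List.cons.injEq, Prod.mk.injEq, Option.some.injEq, Sum.inr.injEq,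
        Sum.inl.injEq] at he
      have en := digit_decomp (p := p) (q := q) n
      rw [← he.1.2] at en
      refine ⟨d, n / q, ?_, he.2⟩
      linear_combination h - (q : ℤ) * en
    · rintro ⟨d, n, h, rfl⟩
      have hl : (d ≠ 0 ∧ d ≠ -1) ∧ (n ≠ 0 ∧ n ≠ -1) := by
        rw [length_conv] at hw
        by_contra hcon
        have : (d = 0 ∨ d = -1) ∨ (n = 0 ∨ n = -1) := by tauto
        have hqy : (q : ℤ) * (y : ℕ) ≤ q ^ 2 := by nlinarith
        have hqy0 : 0 ≤ (q : ℤ) * (y : ℕ) := by positivity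
        have hb : (-(q ^ 2 + |f| + q ^ 2 + p + q) ≤ d ∧ d ≤ q ^ 2 + |f| + q ^ 2 + p + q) ∧
            (-(q ^ 2 + |f| + q ^ 2 + p + q) ≤ n ∧ n ≤ q ^ 2 + |f| + q ^ 2 + p + q) := by
          generalize (q : ℤ) * (y : ℕ) = z at *
          have hq1 : (1 : ℤ) ≤ q ^ 2 := by nlinarith
          generalize (q : ℤ) ^ 2 = Z at *
          rcases this with (rfl | rfl) | (rfl | rfl)
          · refine ⟨by constructor <;> nlinarith, ?_, ?_⟩ <;> by_contra hh <;> nlinarith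
          · refine ⟨by constructor <;> nlinarith, ?_, ?_⟩ <;> by_contra hh <;> nlinarith
          · refine ⟨⟨?_, ?_⟩, by constructor <;> nlinarith⟩ <;> by_contra hh <;> nlinarith
          · refine ⟨⟨?_, ?_⟩, by constructor <;> nlinarith⟩ <;> by_contra hh <;> nlinarith
        have h1 := hN' d hb.1.1 hb.1.2
        have h2 := hN' n hb.2.1 hb.2.2
        omega
      refine ⟨d, (y : ℕ) + (q : ℤ) * n, by linear_combination h, ?_⟩
      rw [encq d hl.1.1 hl.1.2, enc_mul_add y n hl.2.1 hl.2.2]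
      simp [conv]
  · refine ⟨_, isRegular_empty, fun w hw => ?_⟩
    constructor
    · rintro ⟨d, n, h, he⟩
      exfalso
      obtain ⟨⟨d0, d1⟩, n0, n1⟩ := long d n h (by rw [← he]; simp; omega)
      rw [encq d d0 d1, enc_cons n n0 n1] at he
      simp only [conv, List.cons.injEq] at he
      exact hX ⟨_, he.1⟩
    · intro h
      exact absurd h (Set.notMem_empty _)

/-- Pairs arising when a final block `aʲ t⁻¹` is cancelled. -/
def K2 (p q : ℕ) [Fact (1 ≤ p)] [Fact (p < q)] (s : Option (BSBlock p q)) :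
    Language (Option (Sym p q) × Option (Sym p q)) :=
  {w | ∃ (j : Fin p) (d : ℤ), okBlk s (.inr j) ∧
    w = conv (blk (.inr j) :: enc p q ((q : ℤ) * d)) (enc p q ((j : ℕ) + (p : ℤ) * d))}

theorem K2_regular (s : Option (BSBlock p q)) : (K2 p q s).IsRegular := by
  have hp1 : (1 : ℤ) ≤ p := by exact_mod_cast hp.out
  have hpq1 : (p : ℤ) < q := by exact_mod_cast hpq.out
  obtain ⟨N, hN⟩ := enc_short (p := p) (q := q) ((q : ℤ) * (p + 2 * q + 1))
  have long : ∀ (j : Fin p) (d n : ℤ), (j : ℕ) + (p : ℤ) * d = n ∨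
        (∃ y : Fin q, (j : ℕ) + (p : ℤ) * d = (y : ℕ) + q * n) →
      N ≤ (enc p q ((q : ℤ) * d)).length ∨ N ≤ (enc p q n).length → n ≠ 0 ∧ n ≠ -1 := by
    intro j d n h hl
    have hj : ((j : ℕ) : ℤ) < p := by exact_mod_cast j.2
    have hj0 : (0 : ℤ) ≤ ((j : ℕ) : ℤ) := by positivity
    by_contra hcon
    have hn : n = 0 ∨ n = -1 := by tauto
    have hd : -(p + 2 * q + 1 : ℤ) ≤ d ∧ d ≤ p + 2 * q + 1 := by
      rcases h with h | ⟨y, h⟩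
      · rcases hn with rfl | rfl
        · constructor <;> by_contra hh <;> nlinarith
        · constructor <;> by_contra hh <;> nlinarith
      · have hy : ((y : ℕ) : ℤ) < q := by exact_mod_cast y.2
        have hy0 : (0 : ℤ) ≤ ((y : ℕ) : ℤ) := by positivity
        rcases hn with rfl | rfl
        · constructor <;> by_contra hh <;> nlinarith
        · constructor <;> by_contra hh <;> nlinarith
    have h1 := hN (q * d) (by nlinarith) (by nlinarith)
    have h2 := hN n (by rcases hn with rfl | rfl <;> nlinarith)
      (by rcases hn with rfl | rfl <;> nlinarith)
    omega
  refine isRegular_of_deriv _ (N + 1) fun X => ?_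
  by_cases hX : ∃ (j : Fin p) (y : Fin q), okBlk s (.inr j) ∧
      X = (some (blk (.inr j)), some (dig y))
  · obtain ⟨j, y, hj, rfl⟩ := hX
    refine ⟨_, K2aux_regular (p := p) (q := q) ((j : ℕ) - (y : ℕ)), fun w hw => ?_⟩
    constructor
    · rintro ⟨j', d, hj', h⟩
      have hl := congrArg List.length h
      simp [length_conv] at hl
      obtain ⟨n0, n1⟩ := long j' d _ (.inl rfl) (by omega)
      rw [enc_cons _ n0 n1] at h
      simp only [conv, List.cons.injEq, Prod.mk.injEq, Option.some.injEq, Sum.inr.injEq,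
        Sum.inl.injEq] at h
      obtain ⟨⟨rfl, hy⟩, hw'⟩ := h
      have en := digit_decomp (p := p) (q := q) ((j : ℕ) + (p : ℤ) * d)
      rw [← hy] at en
      exact ⟨d, _, by linear_combination -en, hw'⟩
    · rintro ⟨d, n, h, rfl⟩
      rw [length_conv] at hw
      have e : (j : ℕ) + (p : ℤ) * d = (y : ℕ) + q * n := by linear_combination -h
      obtain ⟨n0, n1⟩ := long j d n (.inr ⟨y, e⟩) (by omega)
      refine ⟨j, d, hj, ?_⟩
      rw [e, enc_mul_add y n n0 n1]
      simp [conv]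
  · refine ⟨_, isRegular_empty, fun w hw => ?_⟩
    constructor
    · rintro ⟨j', d, hj', h⟩
      exfalso
      have hl := congrArg List.length h
      simp [length_conv] at hl
      obtain ⟨n0, n1⟩ := long j' d _ (.inl rfl) (by omega)
      rw [enc_cons _ n0 n1] at h
      simp only [conv, List.cons.injEq] at h
      exact hX ⟨j', _, hj', h.1⟩
    · intro h
      exact absurd h (Set.notMem_empty _)

end NormalForm

end CAG

namespace CAG

section Group

set_option linter.unusedSectionVars false

variable (p q : ℕ) [hp : Fact (1 ≤ p)] [hpq : Fact (p < q)]

/-- Normal forms: a reduced stack of blocks and an exponent of `a`. -/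
abbrev NF := {x : List (BSBlock p q) × ℤ // redStack x.1}

variable {p q}

/-- The word of a normal form. -/
def nfWord (x : NF p q) : List (Sym p q) := x.1.1.reverse.map blk ++ enc p q x.1.2

theorem nfWord_aux (bs bs' : List (BSBlock p q)) (k k' : ℤ)
    (h : bs.map (blk (p := p) (q := q)) ++ enc p q k = bs'.map blk ++ enc p q k') :
    bs = bs' ∧ k = k' := by
  induction bs generalizing bs' with
  | nil =>
    cases bs' with
    | nil => exact ⟨rfl, enc_injective (by simpa using h)⟩
    | cons b bs' =>
      obtain ⟨s, w, e⟩ := enc_head (p := p) (q := q) k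
      simp [e] at h
  | cons b bs ih =>
    cases bs' with
    | nil =>
      obtain ⟨s, w, e⟩ := enc_head (p := p) (q := q) k'
      simp [e] at h
    | cons b' bs' =>
      simp only [List.map_cons, List.cons_append, List.cons.injEq, Sum.inl.injEq] at h
      obtain ⟨h1, h2⟩ := ih _ h.2
      exact ⟨by rw [h.1, h1], h2⟩

theorem nfWord_injective : Function.Injective (nfWord (p := p) (q := q)) := by
  rintro ⟨⟨st, k⟩, h⟩ ⟨⟨st', k'⟩, h'⟩ e
  obtain ⟨h1, h2⟩ := nfWord_aux _ _ _ _ e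
  apply Subtype.ext
  exact Prod.ext (List.reverse_injective h1) h2

/-- Right multiplication by `a` on normal forms. -/
def nfA (x : NF p q) : NF p q := ⟨(x.1.1, x.1.2 + 1), x.2⟩

/-- Inverse of `nfA`. -/
def nfA' (x : NF p q) : NF p q := ⟨(x.1.1, x.1.2 - 1), x.2⟩

open Classical in
/-- Generic push/pop: right multiplication by `t` on pairs. -/
noncomputable def tauF (x : List (BSBlock p q) × ℤ) : List (BSBlock p q) × ℤ :=
  if okBlk x.1.head? (.inl (dq p x.2)) then (.inl (dq p x.2) :: x.1, (p : ℤ) * (x.2 / q))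
  else match x.1 with
    | .inr j :: st => (st, (j : ℕ) + (p : ℤ) * (x.2 / q))
    | _ => x

theorem tauF_push (st : List (BSBlock p q)) (r : Fin q) (d : ℤ) (h : okBlk st.head? (.inl r)) :
    tauF (st, (r : ℕ) + (q : ℤ) * d) = (.inl r :: st, (p : ℤ) * d) := by
  simp [tauF, digit_mod, digit_div, h]

theorem tauF_pop (st : List (BSBlock p q)) (j : Fin p) (d : ℤ) :
    tauF (.inr j :: st, (q : ℤ) * d) = (st, (j : ℕ) + (p : ℤ) * d) := by
  have hq0 : 0 < q := by have := hpq.out; omega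
  have h1 := digit_mod (p := p) (⟨0, hq0⟩ : Fin q) d
  have h2 := digit_div (⟨0, hq0⟩ : Fin q) d
  simp at h1 h2
  have hq0' : q ≠ 0 := by omega
  simp [tauF, h1, okBlk, hq0']

theorem tau_cases (x : List (BSBlock p q) × ℤ) :
    (∃ st r d, okBlk st.head? (.inl r) ∧ x = (st, (r : ℕ) + (q : ℤ) * d)) ∨
    (∃ st j d, x = (.inr j :: st, (q : ℤ) * d)) := by
  obtain ⟨st, k⟩ := x
  have e := digit_decomp (p := p) (q := q) k
  by_cases h : okBlk st.head? (.inl (dq p k))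
  · exact .inl ⟨st, _, _, h, by rw [← e]⟩
  · right
    cases st with
    | nil => simp [okBlk] at h
    | cons b st =>
      rcases b with i | j
      · simp [okBlk] at h
      · simp only [List.head?_cons, okBlk, not_not] at h
        rw [h] at e
        exact ⟨st, j, k / q, Prod.ext rfl (by simpa using e)⟩

theorem digitp_aux {p : ℕ} [hp : Fact (1 ≤ p)] (k : ℤ) : (k % (p : ℤ)).toNat < p := by
  have h := hp.out
  have h1 := Int.emod_nonneg k (b := (p : ℤ)) (by omega)
  have h2 := Int.emod_lt_of_pos k (b := (p : ℤ)) (by omega)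
  omega

/-- The last `p`-ary digit of an integer. -/
def dp (k : ℤ) : Fin p := ⟨(k % (p : ℤ)).toNat, digitp_aux k⟩

theorem dp_val (k : ℤ) : (((dp k : Fin p) : ℕ) : ℤ) = k % p := by
  have h := hp.out
  have h1 := Int.emod_nonneg k (b := (p : ℤ)) (by omega)
  simp only [dp]
  omega

theorem digitp_mod (x : Fin p) (m : ℤ) : dp ((x : ℕ) + (p : ℤ) * m) = x := by
  have := x.2
  apply Fin.ext
  have h := dp_val (p := p) ((x : ℕ) + (p : ℤ) * m)
  rw [Int.add_mul_emod_self_left, Int.emod_eq_of_lt (by omega) (by omega)] at h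
  exact_mod_cast h

theorem digitp_decomp (k : ℤ) : k = ((dp k : Fin p) : ℕ) + (p : ℤ) * (k / p) := by
  rw [dp_val]
  exact (Int.emod_add_mul_ediv k p).symm

open Classical in
/-- Right multiplication by `t⁻¹` on pairs. -/
noncomputable def tauI (x : List (BSBlock p q) × ℤ) : List (BSBlock p q) × ℤ :=
  if okBlk x.1.head? (.inr (dp x.2)) then (.inr (dp x.2) :: x.1, (q : ℤ) * (x.2 / p))
  else match x.1 with
    | .inl i :: st => (st, (i : ℕ) + (q : ℤ) * (x.2 / p))
    | _ => x

theorem tauI_push (st : List (BSBlock p q)) (r : Fin p) (d : ℤ) (h : okBlk st.head? (.inr r)) :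
    tauI (st, (r : ℕ) + (p : ℤ) * d) = (.inr r :: st, (q : ℤ) * d) := by
  simp [tauI, digitp_mod, digit_div, h]

theorem tauI_pop (st : List (BSBlock p q)) (j : Fin q) (d : ℤ) :
    tauI (.inl j :: st, (p : ℤ) * d) = (st, (j : ℕ) + (q : ℤ) * d) := by
  have hq0 : 0 < p := by have := hp.out; omega
  have h1 := digitp_mod (⟨0, hq0⟩ : Fin p) d
  simp at h1
  have hq0' : p ≠ 0 := by omega
  simp [tauI, h1, okBlk, hq0']

theorem tauI_cases (x : List (BSBlock p q) × ℤ) :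
    (∃ st r d, okBlk st.head? (.inr r) ∧ x = (st, (r : ℕ) + (p : ℤ) * d)) ∨
    (∃ st j d, x = (.inl j :: st, (p : ℤ) * d)) := by
  obtain ⟨st, k⟩ := x
  have e := digitp_decomp (p := p) k
  by_cases h : okBlk st.head? (.inr (dp k))
  · exact .inl ⟨st, _, _, h, by rw [← e]⟩
  · right
    cases st with
    | nil => simp [okBlk] at h
    | cons b st =>
      rcases b with i | j
      · simp only [List.head?_cons, okBlk, not_not] at h
        rw [h] at e
        exact ⟨st, i, k / p, Prod.ext rfl (by simpa using e)⟩
      · simp [okBlk] at h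

theorem tauF_red (x : List (BSBlock p q) × ℤ) (hx : redStack x.1) : redStack (tauF x).1 := by
  rcases tau_cases x with ⟨st, r, d, h, rfl⟩ | ⟨st, j, d, rfl⟩
  · rw [tauF_push _ _ _ h]; exact ⟨hx, h⟩
  · rw [tauF_pop]; exact hx.1

theorem tauI_red (x : List (BSBlock p q) × ℤ) (hx : redStack x.1) : redStack (tauI x).1 := by
  rcases tauI_cases x with ⟨st, r, d, h, rfl⟩ | ⟨st, j, d, rfl⟩
  · rw [tauI_push _ _ _ h]; exact ⟨hx, h⟩
  · rw [tauI_pop]; exact hx.1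

theorem tauI_tauF (x : List (BSBlock p q) × ℤ) (hx : redStack x.1) : tauI (tauF x) = x := by
  rcases tau_cases x with ⟨st, r, d, h, rfl⟩ | ⟨st, j, d, rfl⟩
  · rw [tauF_push _ _ _ h, tauI_pop]
  · rw [tauF_pop, tauI_push _ _ _ hx.2]

theorem tauF_tauI (x : List (BSBlock p q) × ℤ) (hx : redStack x.1) : tauF (tauI x) = x := by
  rcases tauI_cases x with ⟨st, r, d, h, rfl⟩ | ⟨st, j, d, rfl⟩
  · rw [tauI_push _ _ _ h, tauF_pop]
  · rw [tauI_pop, tauF_push _ _ _ hx.2]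

variable (p q) in
/-- The permutation of normal forms induced by `a`. -/
def permA : Equiv.Perm (NF p q) where
  toFun := nfA
  invFun := nfA'
  left_inv x := by apply Subtype.ext; simp [nfA, nfA']
  right_inv x := by apply Subtype.ext; simp [nfA, nfA']

variable (p q) in
/-- The permutation of normal forms induced by `t`. -/
noncomputable def permT : Equiv.Perm (NF p q) where
  toFun x := ⟨tauF x.1, tauF_red _ x.2⟩
  invFun x := ⟨tauI x.1, tauI_red _ x.2⟩
  left_inv x := Subtype.ext (tauI_tauF _ x.2)
  right_inv x := Subtype.ext (tauF_tauI _ x.2)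

theorem permA_pow (n : ℕ) (x : NF p q) : ((permA p q ^ n) x).1 = (x.1.1, x.1.2 + n) := by
  induction n with
  | zero => simp
  | succ n ih =>
    rw [pow_succ', Equiv.Perm.mul_apply]
    change (((permA p q ^ n) x).1.1, ((permA p q ^ n) x).1.2 + 1) = _
    rw [ih]
    simp [add_assoc]

theorem permA_zpow (n : ℤ) (x : NF p q) : ((permA p q ^ n) x).1 = (x.1.1, x.1.2 + n) := by
  cases n with
  | ofNat n => simpa using permA_pow n x
  | negSucc n =>
    have h := permA_pow (n + 1) ((permA p q ^ (Int.negSucc n)) x)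
    rw [zpow_negSucc, ← Equiv.Perm.mul_apply, mul_inv_cancel, Equiv.Perm.one_apply] at h
    rw [zpow_negSucc]
    generalize ((permA p q ^ (n + 1))⁻¹ x) = y at *
    rw [h]
    apply Prod.ext
    · rfl
    · simp [Int.negSucc_eq]; ring

theorem perm_rel : permT p q * permA p q ^ q = permA p q ^ p * permT p q := by
  ext x : 1
  apply Subtype.ext
  rw [Equiv.Perm.mul_apply, Equiv.Perm.mul_apply, permA_pow]
  change tauF ((permA p q ^ q) x).1 = ((tauF x.1).1, (tauF x.1).2 + p)
  rw [permA_pow]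
  rcases tau_cases x.1 with ⟨st, r, d, h, e⟩ | ⟨st, j, d, e⟩
  · rw [e, tauF_push _ _ _ h]
    have : ((r : ℕ) : ℤ) + q * d + q = (r : ℕ) + q * (d + 1) := by ring
    simp only [this]
    rw [tauF_push _ _ _ h]
    simp [mul_add]
  · rw [e, tauF_pop]
    have : (q : ℤ) * d + q = q * (d + 1) := by ring
    simp only [this]
    rw [tauF_pop]
    simp [mul_add, add_assoc]

open MulOpposite in
variable (p q) in
/-- The right action of the group on normal forms. -/
noncomputable def actHom : BS p q →* (Equiv.Perm (NF p q))ᵐᵒᵖ :=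
  PresentedGroup.toGroup (f := ![op (permA p q), op (permT p q)]) (by
    intro r hr
    rw [BSRels, Set.mem_singleton_iff] at hr
    subst hr
    simp only [map_mul, map_pow, map_inv, FreeGroup.lift_apply_of]
    rw [mul_inv_eq_one, mul_inv_eq_iff_eq_mul]
    apply unop_injective
    simp [perm_rel])

theorem actHom_a : actHom p q (BS.a p q) = MulOpposite.op (permA p q) := by
  simp [actHom, BS.a]

theorem actHom_t : actHom p q (BS.t p q) = MulOpposite.op (permT p q) := by
  simp [actHom, BS.t]

/-- Right action. -/
noncomputable def act (x : NF p q) (g : BS p q) : NF p q := (actHom p q g).unop x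

theorem act_mul (x : NF p q) (g h : BS p q) : act x (g * h) = act (act x g) h := by
  simp [act]

theorem act_one (x : NF p q) : act x 1 = x := by simp [act]

theorem act_a (x : NF p q) : act x (BS.a p q) = nfA x := by simp [act, actHom_a]; rfl

theorem act_t (x : NF p q) : act x (BS.t p q) = permT p q x := by simp [act, actHom_t]

theorem act_t_inv (x : NF p q) : act x (BS.t p q)⁻¹ = (permT p q)⁻¹ x := by simp [act, actHom_t]

theorem act_a_zpow (x : NF p q) (n : ℤ) : (act x (BS.a p q ^ n)).1 = (x.1.1, x.1.2 + n) := by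
  rw [← permA_zpow]
  simp [act, actHom_a]

theorem rel_BS : BS.t p q * BS.a p q ^ p = BS.a p q ^ q * BS.t p q := by
  rw [← mul_inv_eq_iff_eq_mul, ← mul_inv_eq_one]
  exact PresentedGroup.one_of_mem (rels := BSRels p q) (Set.mem_singleton _)

theorem rel_BS_zpow (d : ℤ) :
    BS.a p q ^ ((q : ℤ) * d) * BS.t p q = BS.t p q * BS.a p q ^ ((p : ℤ) * d) := by
  have h : SemiconjBy (BS.t p q) (BS.a p q ^ p) (BS.a p q ^ q) := rel_BS
  have := h.zpow_right d
  rw [zpow_mul, zpow_mul, zpow_natCast, zpow_natCast]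
  exact this.symm

/-- Value in the group of a stack of blocks. -/
def stVal : List (BSBlock p q) → BS p q
  | [] => 1
  | b :: st => stVal st * b.elem

/-- Value in the group of a normal form. -/
def nfVal (x : NF p q) : BS p q := stVal x.1.1 * BS.a p q ^ x.1.2

theorem nfVal_A (x : NF p q) : nfVal (nfA x) = nfVal x * BS.a p q := by
  simp [nfVal, nfA, zpow_add, mul_assoc]

theorem nfVal_T (x : NF p q) : nfVal (permT p q x) = nfVal x * BS.t p q := by
  change stVal (tauF x.1).1 * BS.a p q ^ (tauF x.1).2 = _
  rw [nfVal]
  rcases tau_cases x.1 with ⟨st, r, d, h, e⟩ | ⟨st, j, d, e⟩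
  · rw [e, tauF_push _ _ _ h]
    simp only [stVal, BSBlock.elem]
    rw [zpow_add, mul_assoc (stVal st) _ (BS.t p q), mul_assoc _ _ (BS.t p q), rel_BS_zpow]
    simp [mul_assoc]
  · rw [e, tauF_pop]
    simp only [stVal, BSBlock.elem]
    rw [mul_assoc _ _ (BS.t p q), rel_BS_zpow, zpow_add]
    simp [mul_assoc]

theorem nfVal_act (x : NF p q) (g : BS p q) : nfVal (act x g) = nfVal x * g := by
  let H : Subgroup (BS p q) :=
    { carrier := {g | ∀ x, nfVal (act x g) = nfVal x * g}
      mul_mem' := fun {g h} hg hh x => by rw [act_mul, hh, hg, mul_assoc]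
      one_mem' := fun x => by rw [act_one, mul_one]
      inv_mem' := fun {g} hg x => by
        have := hg (act x g⁻¹)
        rw [← act_mul, inv_mul_cancel, act_one] at this
        rw [this]; simp }
  have : H = ⊤ := by
    rw [eq_top_iff, ← PresentedGroup.closure_range_of (BSRels p q), Subgroup.closure_le]
    rintro _ ⟨i, rfl⟩
    fin_cases i
    · intro x
      exact (congrArg nfVal (act_a x)).trans (nfVal_A x)
    · intro x
      exact (congrArg nfVal (act_t x)).trans (nfVal_T x)
  have hg : g ∈ H := this ▸ Subgroup.mem_top g
  exact hg x

variable (p q) in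
/-- The trivial normal form. -/
def nfOne : NF p q := ⟨([], 0), trivial⟩

theorem act_nfVal_aux (st : List (BSBlock p q)) (h : redStack st) :
    act (nfOne p q) (stVal st) = ⟨(st, 0), h⟩ := by
  induction st with
  | nil => rw [stVal, act_one]; rfl
  | cons b st ih =>
    have hst : redStack st := h.1
    have hb : okBlk st.head? b := h.2
    rw [stVal, act_mul, ih hst]
    rcases b with i | j
    · rw [BSBlock.elem, act_mul, act_t]
      apply Subtype.ext
      change tauF (act _ _).1 = _
      rw [← zpow_natCast, act_a_zpow]
      have := tauF_push st i 0 hb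
      simpa using this
    · rw [BSBlock.elem, act_mul, act_t_inv]
      apply Subtype.ext
      change tauI (act _ _).1 = _
      rw [← zpow_natCast, act_a_zpow]
      have := tauI_push st j 0 hb
      simpa using this

theorem act_nfVal (x : NF p q) : act (nfOne p q) (nfVal x) = x := by
  rw [nfVal, act_mul, act_nfVal_aux _ x.2]
  apply Subtype.ext
  rw [act_a_zpow]
  simp

theorem nfVal_bijective : Function.Bijective (nfVal (p := p) (q := q)) := by
  constructor
  · intro x y h
    rw [← act_nfVal x, ← act_nfVal y, h]
  · intro g
    refine ⟨act (nfOne p q) g, ?_⟩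
    rw [nfVal_act]
    simp [nfOne, nfVal, stVal]

end Group

end CAG

namespace CAG

section Final

set_option linter.unusedSectionVars false

variable (p q : ℕ) [hp : Fact (1 ≤ p)] [hpq : Fact (p < q)]

variable {p q}

theorem isRegular_congr {Γ : Type*} {L L' : Language Γ} (h : ∀ w, w ∈ L ↔ w ∈ L')
    (hL : L'.IsRegular) : L.IsRegular := by
  have : L = L' := Set.ext h
  rwa [this]

theorem nfWord_regular :
    Language.IsRegular {w : List (Sym p q) | ∃ x : NF p q, w = nfWord x} := by
  have h := isRegular_prefix (p := p) (q := q) blk (fun _ => EncL p q) (fun _ => EncL_regular) none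
  refine isRegular_congr (fun w => ?_) h
  constructor
  · rintro ⟨⟨⟨st, k⟩, hst⟩, rfl⟩
    exact ⟨st.reverse, (okChain_reverse st).2 hst, _, ⟨k, rfl⟩, rfl⟩
  · rintro ⟨bs, hbs, _, ⟨k, rfl⟩, rfl⟩
    refine ⟨⟨(bs.reverse, k), (okChain_reverse _).1 (by simpa using hbs)⟩, ?_⟩
    simp [nfWord]

/-- The diagonal letter of a block. -/
def blk2 (b : BSBlock p q) : Option (Sym p q) × Option (Sym p q) := (some (blk b), some (blk b))

theorem conv_blk2 (bs : List (BSBlock p q)) (u v : List (Sym p q)) :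
    conv (bs.map blk ++ u) (bs.map blk ++ v) = bs.map blk2 ++ conv u v := by
  induction bs with
  | nil => simp
  | cons b bs ih => simp [conv, ih, blk2]

theorem nfA_regular :
    Language.IsRegular {w | ∃ x : NF p q, w = conv (nfWord x) (nfWord (nfA x))} := by
  have h := isRegular_prefix (p := p) (q := q) blk2 (fun _ => LinL p q 1 1 1)
    (fun _ => LinL_regular _ _ _ le_rfl le_rfl) none
  refine isRegular_congr (fun w => ?_) h
  constructor
  · rintro ⟨⟨⟨st, k⟩, hst⟩, rfl⟩
    refine ⟨st.reverse, (okChain_reverse st).2 hst, _, ⟨k, k + 1, by ring, rfl⟩, ?_⟩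
    exact conv_blk2 _ _ _
  · rintro ⟨bs, hbs, _, ⟨k, n, e, rfl⟩, rfl⟩
    refine ⟨⟨(bs.reverse, k), (okChain_reverse _).1 (by simpa using hbs)⟩, ?_⟩
    obtain rfl : n = k + 1 := by simpa using e
    simp [nfWord, nfA, conv_blk2]

theorem nfT_regular :
    Language.IsRegular {w | ∃ x : NF p q, w = conv (nfWord x) (nfWord (permT p q x))} := by
  have h := isRegular_prefix (p := p) (q := q) blk2 (fun s => K1 p q s + K2 p q s)
    (fun s => (K1_regular s).add (K2_regular s)) none
  refine isRegular_congr (fun w => ?_) h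
  constructor
  · rintro ⟨⟨x, hst⟩, rfl⟩
    rcases tau_cases x with ⟨st, r, d, h, rfl⟩ | ⟨st, j, d, rfl⟩
    · refine ⟨st.reverse, (okChain_reverse st).2 hst,
        conv (enc p q ((r : ℕ) + (q : ℤ) * d)) (blk (.inl r) :: enc p q ((p : ℤ) * d)), ?_, ?_⟩
      · exact Or.inl ⟨r, d, by rwa [lastBlk_reverse], rfl⟩
      · rw [← conv_blk2]
        change conv _ ((tauF _).1.reverse.map blk ++ enc p q (tauF _).2) = _
        rw [tauF_push _ _ _ h]
        simp [nfWord]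
    · refine ⟨st.reverse, (okChain_reverse st).2 hst.1,
        conv (blk (.inr j) :: enc p q ((q : ℤ) * d)) (enc p q ((j : ℕ) + (p : ℤ) * d)), ?_, ?_⟩
      · exact Or.inr ⟨j, d, by rw [lastBlk_reverse]; exact hst.2, rfl⟩
      · rw [← conv_blk2]
        change conv _ ((tauF _).1.reverse.map blk ++ enc p q (tauF _).2) = _
        rw [tauF_pop]
        simp [nfWord]
  · rintro ⟨bs, hbs, _, hv, rfl⟩
    obtain ⟨st, rfl⟩ : ∃ st, bs = st.reverse := ⟨bs.reverse, by simp⟩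
    rw [lastBlk_reverse] at hv
    have hst := (okChain_reverse _).1 hbs
    rcases hv with ⟨r, d, h, rfl⟩ | ⟨j, d, h, rfl⟩
    · refine ⟨⟨(st, (r : ℕ) + (q : ℤ) * d), hst⟩, ?_⟩
      rw [← conv_blk2]
      change _ = conv _ ((tauF _).1.reverse.map blk ++ enc p q (tauF _).2)
      rw [tauF_push _ _ _ h]
      simp [nfWord]
    · refine ⟨⟨(.inr j :: st, (q : ℤ) * d), ⟨hst, h⟩⟩, ?_⟩
      rw [← conv_blk2]
      change _ = conv _ ((tauF _).1.reverse.map blk ++ enc p q (tauF _).2)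
      rw [tauF_pop]
      simp [nfWord]

/-! ### Short elements -/

variable (p q) in
/-- The generating set. -/
abbrev gens : Set (BS p q) := {BS.a p q, BS.t p q}

theorem eval_nil : eval (gens p q) [] = 1 := rfl

theorem eval_cons (x : Alph (gens p q)) (w : List (Alph (gens p q))) :
    eval (gens p q) (x :: w) = x.1 * eval (gens p q) w := List.prod_cons

theorem eval_append (w v : List (Alph (gens p q))) :
    eval (gens p q) (w ++ v) = eval (gens p q) w * eval (gens p q) v := by
  induction w with
  | nil => rw [eval_nil, one_mul, List.nil_append]
  | cons x w ih => rw [List.cons_append, eval_cons, eval_cons, ih, mul_assoc]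

/-- `g` is a product of at most `n` letters. -/
def Short (g : BS p q) (n : ℕ) : Prop :=
  ∃ w : List (Alph (gens p q)), eval (gens p q) w = g ∧ w.length ≤ n

theorem Short.wordLength_le {g : BS p q} {n : ℕ} (h : Short g n) :
    wordLength (gens p q) g ≤ n := by
  obtain ⟨w, hw, hn⟩ := h
  refine le_trans ?_ hn
  unfold wordLength
  exact Nat.sInf_le ⟨w, hw, rfl⟩

theorem Short.mono {g : BS p q} {n m : ℕ} (h : Short g n) (hnm : n ≤ m) : Short g m := by
  obtain ⟨w, hw, hn⟩ := h
  exact ⟨w, hw, hn.trans hnm⟩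

theorem Short.mul {g h : BS p q} {n m : ℕ} (hg : Short g n) (hh : Short h m) :
    Short (g * h) (n + m) := by
  obtain ⟨w, rfl, hn⟩ := hg
  obtain ⟨v, rfl, hm⟩ := hh
  exact ⟨w ++ v, eval_append _ _, by simp; omega⟩

theorem Short.one : Short (1 : BS p q) 0 := ⟨[], eval_nil, by simp⟩

theorem Short.letter (x : Alph (gens p q)) : Short x.1 1 := ⟨[x], by rw [eval_cons, eval_nil, mul_one], by simp⟩

theorem mem_gens_inv {g : BS p q} (h : g ∈ gens p q ∪ (gens p q)⁻¹) :
    g⁻¹ ∈ gens p q ∪ (gens p q)⁻¹ := by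
  rcases h with h | h
  · exact Or.inr (by simpa using h)
  · exact Or.inl h

theorem Short.inv {g : BS p q} {n : ℕ} (h : Short g n) : Short g⁻¹ n := by
  obtain ⟨w, rfl, hn⟩ := h
  refine Short.mono ?_ hn
  clear hn
  induction w with
  | nil => simpa [eval_nil] using Short.one (p := p) (q := q)
  | cons x w ih =>
    have h1 := Short.letter (p := p) (q := q) ⟨x.1⁻¹, mem_gens_inv x.2⟩
    have := ih.mul h1
    simpa [eval_cons] using this

variable (p q) in
theorem short_a : Short (BS.a p q) 1 := Short.letter ⟨BS.a p q, Or.inl (Or.inl rfl)⟩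

variable (p q) in
theorem short_t : Short (BS.t p q) 1 := Short.letter ⟨BS.t p q, Or.inl (Or.inr rfl)⟩

variable (p q) in
theorem short_a_pow (n : ℕ) : Short (BS.a p q ^ n) n := by
  induction n with
  | zero => simpa using Short.one
  | succ n ih => rw [pow_succ]; exact ih.mul (short_a p q)

variable (p q) in
theorem short_a_zpow_abs (k : ℤ) : Short (BS.a p q ^ k) k.natAbs := by
  obtain ⟨n, rfl | rfl⟩ := Int.eq_nat_or_neg k
  · rw [zpow_natCast]; simpa using short_a_pow p q n
  · rw [zpow_neg, zpow_natCast]; simpa using (short_a_pow p q n).inv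

theorem short_block (b : BSBlock p q) : Short b.elem q := by
  have := hpq.out
  rcases b with i | j
  · exact ((short_a_pow p q i).mul (short_t p q)).mono (by omega)
  · exact ((short_a_pow p q j).mul (short_t p q).inv).mono (by omega)

theorem short_stVal (st : List (BSBlock p q)) : Short (stVal st) (q * st.length) := by
  induction st with
  | nil => simpa [stVal] using Short.one (p := p) (q := q)
  | cons b st ih => exact (ih.mul (short_block b)).mono (by simp [mul_add])

theorem a_zpow_step (r : ℕ) (d : ℤ) : BS.a p q ^ ((r : ℤ) + (q : ℤ) * d) =
    BS.a p q ^ r * (BS.t p q * BS.a p q ^ ((p : ℤ) * d)) * (BS.t p q)⁻¹ := by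
  rw [← rel_BS_zpow, zpow_add, zpow_natCast]
  group

theorem short_a_zpow (j : ℕ) (k : ℤ)
    (h : (|k| : ℝ) ≤ (p : ℝ) * q + ((q : ℝ) / p) ^ j) :
    Short (BS.a p q ^ k) (p * q + 1 + (q + 1) * j) := by
  have hp1 := hp.out
  have hpq1 := hpq.out
  induction j generalizing k with
  | zero =>
    refine (short_a_zpow_abs p q k).mono ?_
    simp only [pow_zero] at h
    have h' : |k| ≤ (p : ℤ) * q + 1 := by exact_mod_cast h
    rw [Int.abs_eq_natAbs] at h'
    simp only [mul_zero, add_zero]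
    exact_mod_cast h'
  | succ j ih =>
    obtain ⟨r, hr⟩ : ∃ r : Fin q, k = (r : ℕ) + (q : ℤ) * (k / q) :=
      ⟨_, digit_decomp (p := p) (q := q) k⟩
    generalize k / q = d at hr
    have hpR : (1 : ℝ) ≤ p := by exact_mod_cast hp1
    have hqR : (p : ℝ) + 1 ≤ q := by exact_mod_cast hpq1
    have hrq : ((r : ℕ) : ℝ) ≤ q := by exact_mod_cast r.2.le
    have hr0 : (0 : ℝ) ≤ ((r : ℕ) : ℝ) := by positivity
    have h1 : (q : ℝ) * |(d : ℝ)| ≤ |(k : ℝ)| + q := by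
      have : (q : ℝ) * d = k - (r : ℕ) := by rw [hr]; push_cast; ring
      rw [← abs_of_nonneg (show (0 : ℝ) ≤ q by linarith), ← abs_mul, this,
        abs_of_nonneg (show (0 : ℝ) ≤ q by linarith)]
      refine (abs_sub _ _).trans ?_
      rw [abs_of_nonneg hr0]
      linarith
    have h2 := ih ((p : ℤ) * d) (by
      have e : ((q : ℝ) / p) ^ (j + 1) * p = (q : ℝ) * ((q : ℝ) / p) ^ j := by
        rw [pow_succ]; field_simp
      push_cast
      rw [abs_mul, abs_of_nonneg (show (0 : ℝ) ≤ p by linarith)]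
      have hq0 : (0 : ℝ) < q := by linarith
      refine le_of_mul_le_mul_left ?_ hq0
      calc (q : ℝ) * (p * |(d : ℝ)|) = p * (q * |(d : ℝ)|) := by ring
        _ ≤ p * (p * q + ((q : ℝ) / p) ^ (j + 1) + q) := by gcongr; linarith
        _ = p * q * (p + 1) + q * ((q : ℝ) / p) ^ j := by rw [← e]; ring
        _ ≤ p * q * q + q * ((q : ℝ) / p) ^ j := by gcongr
        _ = _ := by ring)
    rw [hr, a_zpow_step]
    refine (((short_a_pow p q r).mul ((short_t p q).mul h2)).mul (short_t p q).inv).mono ?_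
    have := r.2
    rw [mul_add (q + 1)]
    omega

variable (p q) in
theorem exists_short_enc : ∃ m : ℕ, ∀ k : ℤ,
    Short (BS.a p q ^ k) (p * q + 1 + m * (enc p q k).length) := by
  have hp1 := hp.out
  have hpq1 := hpq.out
  have hpR : (1 : ℝ) ≤ p := by exact_mod_cast hp1
  have hqR : (p : ℝ) + 1 ≤ q := by exact_mod_cast hpq1
  obtain ⟨m, hm⟩ := pow_unbounded_of_one_lt (q : ℝ)
    (show (1 : ℝ) < (q : ℝ) / p by rw [one_lt_div (by linarith)]; linarith)
  refine ⟨(q + 1) * m, fun k => ?_⟩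
  rw [mul_assoc]
  apply short_a_zpow
  obtain ⟨h1, h2⟩ := enc_length_bound (p := p) (q := q) k
  have h3 : |k| ≤ (q : ℤ) ^ (enc p q k).length := abs_le.2 ⟨h1, h2.le⟩
  have h4 : |(k : ℝ)| ≤ (q : ℝ) ^ (enc p q k).length := by exact_mod_cast h3
  have h5 : (q : ℝ) ^ (enc p q k).length ≤ (((q : ℝ) / p) ^ m) ^ (enc p q k).length :=
    pow_le_pow_left₀ (by linarith) hm.le _
  rw [pow_mul]
  have : (0 : ℝ) ≤ p * q := by positivity
  linarith

variable (p q) in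
theorem exists_short_nfVal : ∃ C : ℕ, ∀ x : NF p q, Short (nfVal x) (C * (nfWord x).length) := by
  obtain ⟨m, hm⟩ := exists_short_enc p q
  refine ⟨p * q + 1 + m + q, fun x => ?_⟩
  refine ((short_stVal x.1.1).mul (hm x.1.2)).mono ?_
  have : 1 ≤ (enc p q x.1.2).length := by
    obtain ⟨s, w, e⟩ := enc_head (p := p) (q := q) x.1.2
    simp [e]
  simp only [nfWord, List.length_append, List.length_map, List.length_reverse]
  generalize (enc p q x.1.2).length = n at *
  generalize x.1.1.length = l at *
  nlinarith [Nat.zero_le ((p * q + 1 + m) * l), Nat.zero_le (q * n),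
    Nat.mul_le_mul_left (p * q + 1) this]

/-! ### Coding -/

variable (p q) in
/-- Exponent sum of `t`. -/
noncomputable def expT : BS p q →* Multiplicative ℤ :=
  PresentedGroup.toGroup (f := ![1, Multiplicative.ofAdd 1]) (by
    intro r hr
    rw [BSRels, Set.mem_singleton_iff] at hr
    subst hr
    simp)

theorem t_ne_inv : BS.t p q ≠ (BS.t p q)⁻¹ := by
  intro h
  have h1 : expT p q (BS.t p q) = Multiplicative.ofAdd 1 := by simp [expT, BS.t]
  have h2 := congrArg (expT p q) h
  rw [map_inv, h1, ← ofAdd_neg] at h2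
  have := Multiplicative.ofAdd.injective h2
  omega

variable (p q) in
/-- The letter `t`. -/
def letT : Alph (gens p q) := ⟨BS.t p q, Or.inl (Or.inr rfl)⟩

variable (p q) in
/-- The letter `t⁻¹`. -/
def letTinv : Alph (gens p q) := ⟨(BS.t p q)⁻¹, mem_gens_inv (letT p q).2⟩

theorem letT_ne : letT p q ≠ letTinv p q := fun h => t_ne_inv (congrArg Subtype.val h)

open Classical in
/-- Coding of the symbols by words of constant length. -/
noncomputable def code (x : Sym p q) : List (Alph (gens p q)) :=
  (Finset.univ.toList : List (Sym p q)).map (fun y => if y = x then letT p q else letTinv p q)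

theorem code_length (x : Sym p q) : (code x).length = Fintype.card (Sym p q) := by
  simp [code]

theorem card_pos' : 0 < Fintype.card (Sym p q) :=
  Fintype.card_pos_iff.2 ⟨Sum.inr (Sum.inr true)⟩

theorem code_injective : Function.Injective (code (p := p) (q := q)) := by
  intro x y h
  have h1 := List.map_inj_left.1 h x (by simp)
  by_contra hxy
  simp only [if_true, if_neg hxy] at h1
  exact letT_ne h1

theorem flatMap_code_injective (u v : List (Sym p q)) (h : u.flatMap code = v.flatMap code) :
    u = v := by
  have hc := card_pos' (p := p) (q := q)
  induction u generalizing v with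
  | nil =>
    cases v with
    | nil => rfl
    | cons y v =>
      have := congrArg List.length h
      simp [code_length] at this
      omega
  | cons x u ih =>
    cases v with
    | nil =>
      have := congrArg List.length h
      simp [code_length] at this
    | cons y v =>
      simp only [List.flatMap_cons] at h
      obtain ⟨h1, h2⟩ := List.append_inj h (by simp [code_length])
      rw [code_injective h1, ih v h2]

/-- The coded word of a normal form. -/
noncomputable def cw (x : NF p q) : List (Alph (gens p q)) := (nfWord x).flatMap code

theorem cw_injective : Function.Injective (cw (p := p) (q := q)) := fun _ _ h =>
  nfWord_injective (flatMap_code_injective _ _ h)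

theorem cw_length (x : NF p q) : (nfWord x).length ≤ (cw x).length := by
  have hc := card_pos' (p := p) (q := q)
  rw [cw, List.length_flatMap]
  simp only [code_length, List.map_const', List.sum_replicate, smul_eq_mul]
  exact Nat.le_mul_of_pos_right _ hc

instance : Finite (Alph (gens p q)) :=
  Set.Finite.to_subtype ((Set.toFinite (gens p q)).union (Set.toFinite (gens p q)).inv)

instance : Nonempty (NF p q) := ⟨nfOne p q⟩

/-- The representation. -/
noncomputable def psi (w : List (Alph (gens p q))) : BS p q := nfVal (Function.invFun cw w)

theorem psi_cw (x : NF p q) : psi (cw x) = nfVal x := by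
  rw [psi, Function.leftInverse_invFun cw_injective]

variable (p q) in
/-- The language of the representation. -/
def theL : Language (Alph (gens p q)) := {w | ∃ x : NF p q, w = cw x}

theorem theL_regular : (theL p q).IsRegular := by
  have h := isRegular_flatMap (code (p := p) (q := q)) (fun x e => by
    have := code_length x
    have hc := card_pos' (p := p) (q := q)
    rw [e] at this
    simp at this) _ nfWord_regular
  refine isRegular_congr (fun w => ?_) h
  constructor
  · rintro ⟨x, rfl⟩
    exact ⟨_, ⟨x, rfl⟩, rfl⟩
  · rintro ⟨_, ⟨x, rfl⟩, rfl⟩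
    exact ⟨x, rfl⟩

theorem rel_regular (g : BS p q) (f : NF p q → NF p q) (hf : ∀ x, nfVal (f x) = nfVal x * g)
    (hR : Language.IsRegular {w | ∃ x : NF p q, w = conv (nfWord x) (nfWord (f x))}) :
    IsRegularRel {x : List (Alph (gens p q)) × List (Alph (gens p q)) |
      x.1 ∈ theL p q ∧ x.2 ∈ theL p q ∧ psi x.2 = psi x.1 * g} := by
  have h := isRegularRel_code (code (p := p) (q := q)) _ card_pos' code_length nfWord
    (fun x => nfWord (f x)) hR
  unfold IsRegularRel
  refine isRegular_congr (fun w => ?_) h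
  constructor
  · rintro ⟨⟨_, _⟩, ⟨⟨x, rfl⟩, ⟨y, rfl⟩, e⟩, rfl⟩
    rw [psi_cw, psi_cw, ← hf] at e
    rw [nfVal_bijective.1 e]
    exact ⟨x, rfl⟩
  · rintro ⟨x, rfl⟩
    exact ⟨(cw x, cw (f x)), ⟨⟨x, rfl⟩, ⟨_, rfl⟩, by rw [psi_cw, psi_cw, hf]⟩, rfl⟩

variable (p q) in
theorem main_rep : IsCayleyAutomaticRep (gens p q) (theL p q) psi := by
  refine ⟨theL_regular, ⟨fun _ _ => trivial, ?_, ?_⟩, ?_⟩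
  · rintro _ ⟨x, rfl⟩ _ ⟨y, rfl⟩ e
    rw [psi_cw, psi_cw] at e
    rw [nfVal_bijective.1 e]
  · intro g _
    obtain ⟨x, rfl⟩ := nfVal_bijective.2 g
    exact ⟨cw x, ⟨x, rfl⟩, psi_cw x⟩
  · rintro g (rfl | rfl)
    · exact rel_regular _ _ nfVal_A nfA_regular
    · exact rel_regular _ _ nfVal_T nfT_regular

variable (p q) in
theorem main_inB : InB (gens p q) identF := by
  obtain ⟨C, hC⟩ := exists_short_nfVal p q
  refine ⟨theL p q, psi, main_rep p q, C + 1, 1, 1, by omega, one_pos, one_pos, le_rfl, ?_⟩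
  rintro n - _ ⟨x, rfl⟩ hn
  have h1 : Short (eval (gens p q) (cw x)) n := ⟨_, rfl, hn⟩
  have h2 : Short (nfVal x) (C * n) :=
    (hC x).mono (Nat.mul_le_mul_left _ ((cw_length x).trans hn))
  have h3 := (h1.inv.mul h2).wordLength_le
  rw [psi_cw]
  change ((wordLength (gens p q) _ : ℕ) : ℝ) ≤ ((C + 1 : ℕ) : ℝ) * ((1 * n : ℕ) : ℝ)
  rw [← Nat.cast_mul, Nat.cast_le]
  refine h3.trans (le_of_eq (by ring))

end Final

end CAG


open CAG in
/-- For `1 ≤ p < q`, the Baumslag–Solitar group `BS(p,q)` belongs to the class `ℬ_𝔦`,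
where `𝔦(n) = n` is the identity function. -/
theorem BS_mem_classB_ident (p q : ℕ) (hp : 1 ≤ p) (hpq : p < q) :
    InB ({BS.a p q, BS.t p q} : Set (BS p q)) identF := by
  haveI : Fact (1 ≤ p) := ⟨hp⟩
  haveI : Fact (p < q) := ⟨hpq⟩
  exact main_inB p q
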